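/- arXiv:1909.04484 — 2 statements merged into one kernel-verified Lean document; each statement's English description precedes it below -/
import Mathlib

section
/- Assume F ∈ C¹(ℝ,ℝ) with F(0) = 0 and F′(x) = O(1/|log x|) as x → 0⁺. Then there exist δ = δ(F) > 0 and M = M(F) > 0 such that for every ε ≥ 0 and every β with 2 < β < 2 + δ, |ψ^ε(β) − 2| ≤ ε·M·(β − 2). -/
/-- The orbit of `1` under the β-map `T_β(x) = βx mod 1`: `t₀ = 1`,
`t_{n+1} = β t_n − ⌊β t_n⌋`. -/
noncomputable def betaOrbit (β : ℝ) : ℕ → ℝ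
  | 0 => 1
  | n + 1 => Int.fract (β * betaOrbit β n)

/-- `E(β) = (∑ t_n(β)²/(2βⁿ)) / (∑ t_n(β)/βⁿ)`, the expectation of the unique acim of
the β-map. -/
noncomputable def Ebeta (β : ℝ) : ℝ :=
  (∑' n : ℕ, (betaOrbit β n) ^ 2 / (2 * β ^ n)) / (∑' n : ℕ, betaOrbit β n / β ^ n)

/-- `ψ^ε(β) = 2 + ε F(1/E(β) − 2)`. -/
noncomputable def psi (ε : ℝ) (F : ℝ → ℝ) (β : ℝ) : ℝ :=
  2 + ε * F (1 / Ebeta β - 2)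

/-!
Clearing denominators writes `1 / E(β) - 2` as the nonnegative series `∑ tₙ (1 - tₙ) / βⁿ`, whose
zeroth term vanishes because `t₀ = 1`, divided by a number that is at least `1 / 2`. With `s` the
fractional part of `β`, the bounds `t_{n+1} ≤ s βⁿ` and `t_{n+1} ≤ 1` show that the remaining terms
are at most `min (s, β⁻ⁿ)`, and cutting the series at `n ≈ log (1 / s) / log β` gives
`1 / E(β) - 2 = O(s |log s|)` as `β` decreases to an integer `N ≥ 2`. The mean value theorem turns
`F'(x) = O(1 / |log x|)` into `F(x) = O(x / |log x|)`, and at `x = O(s |log s|)` the two logarithms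
cancel: eventually `x ≤ √s`, so that `|log x| ≥ |log s| / 2`.
-/

open Asymptotics Filter Set Topology

lemma exists_norm_le_mul_of_isBigO_nhdsGT {E G : Type*} [NormedAddCommGroup E]
    [NormedAddCommGroup G] {a : ℝ} {f : ℝ → E} {g : ℝ → G} (h : f =O[𝓝[>] a] g) :
    ∃ δ > 0, ∃ C > 0, ∀ x, a < x → x < a + δ → ‖f x‖ ≤ C * ‖g x‖ := by
  obtain ⟨C, hC, hbound⟩ := h.exists_pos
  obtain ⟨b, hb, hb'⟩ := mem_nhdsGT_iff_exists_Ioo_subset.1 hbound.bound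
  exact ⟨b - a, sub_pos.2 hb, C, hC, fun x hx hx' ↦ hb' ⟨hx, by linarith⟩⟩

section LogarithmicAsymptotics

variable {E : Type*} [NormedAddCommGroup E]

lemma isBigO_inv_log_of_norm_le_div_abs_log {f : ℝ → E} {C x₀ : ℝ}
    (hx₀ : 0 < x₀) (hf : ∀ x, 0 < x → x < x₀ → ‖f x‖ ≤ C / |Real.log x|) :
    f =O[𝓝[>] 0] fun x ↦ (Real.log x)⁻¹ := by
  refine .of_bound C ?_
  filter_upwards [Ioo_mem_nhdsGT hx₀] with x hx
  simpa only [norm_inv, Real.norm_eq_abs, div_eq_mul_inv] using hf x hx.1 hx.2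

variable [NormedSpace ℝ E]

lemma norm_image_sub_le_mul_of_norm_deriv_le_monotoneOn {f : ℝ → E} {g : ℝ → ℝ} {a b x : ℝ}
    (hf : ContinuousWithinAt f (Ioi a) a) (hf' : ∀ y ∈ Ioo a b, DifferentiableAt ℝ f y)
    (hg : MonotoneOn g (Ioo a b)) (hfg : ∀ y ∈ Ioo a b, ‖deriv f y‖ ≤ g y) (hx : x ∈ Ioo a b) :
    ‖f x - f a‖ ≤ g x * (x - a) := by
  have hsub : Ioc a x ⊆ Ioo a b := fun y hy ↦ ⟨hy.1, hy.2.trans_lt hx.2⟩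
  have mean_value : ∀ y ∈ Ioc a x, ‖f x - f y‖ ≤ g x * ‖x - y‖ := fun y hy ↦
    (convex_Ioc a x).norm_image_sub_le_of_norm_deriv_le (fun z hz ↦ hf' z (hsub hz))
      (fun z hz ↦ (hfg z (hsub hz)).trans (hg (hsub hz) hx hz.2)) hy ⟨hx.1, le_rfl⟩
  have hlim : Tendsto (fun y ↦ g x * ‖x - y‖) (𝓝[>] a) (𝓝 (g x * (x - a))) := by
    have : ContinuousAt (fun y ↦ g x * ‖x - y‖) a := by fun_prop
    simpa only [ContinuousAt, Real.norm_of_nonneg (sub_pos.2 hx.1).le]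
      using this.tendsto.mono_left nhdsWithin_le_nhds
  refine le_of_tendsto_of_tendsto (tendsto_const_nhds.sub hf.tendsto).norm hlim ?_
  filter_upwards [Ioc_mem_nhdsGT hx.1] with y hy using mean_value y hy

lemma monotoneOn_inv_abs_log : MonotoneOn (fun x ↦ |Real.log x|⁻¹) (Ioo 0 1) := by
  intro x hx y hy hxy
  have hlog : Real.log x ≤ Real.log y := Real.log_le_log hx.1 hxy
  have hlog_neg : Real.log y < 0 := Real.log_neg hy.1 hy.2
  simp only [abs_of_neg hlog_neg, abs_of_neg (hlog.trans_lt hlog_neg)]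
  exact inv_anti₀ (neg_pos.2 hlog_neg) (neg_le_neg hlog)

lemma isBigO_sub_div_log_of_deriv_isBigO_inv_log {f : ℝ → E}
    (hf : ContinuousWithinAt f (Ioi 0) 0) (hdiff : ∀ᶠ x in 𝓝[>] 0, DifferentiableAt ℝ f x)
    (hderiv : deriv f =O[𝓝[>] 0] fun x ↦ (Real.log x)⁻¹) :
    (fun x ↦ f x - f 0) =O[𝓝[≥] 0] fun x ↦ x / Real.log x := by
  obtain ⟨C, hC, hbound⟩ := hderiv.exists_pos
  obtain ⟨r, hr, hr'⟩ := mem_nhdsGT_iff_exists_Ioo_subset.1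
    (hdiff.and (hbound.bound.and (Ioo_mem_nhdsGT one_pos)))
  have hmono : MonotoneOn (fun x ↦ C * |Real.log x|⁻¹) (Ioo 0 r) := fun x hx y hy hxy ↦
    mul_le_mul_of_nonneg_left
      (monotoneOn_inv_abs_log (hr' hx).2.2 (hr' hy).2.2 hxy) hC.le
  have hpos : (fun x ↦ f x - f 0) =O[𝓝[>] 0] fun x ↦ x / Real.log x := by
    refine .of_bound C ?_
    filter_upwards [Ioo_mem_nhdsGT hr] with x hx
    calc ‖f x - f 0‖
      _ ≤ C * |Real.log x|⁻¹ * (x - 0) :=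
        norm_image_sub_le_mul_of_norm_deriv_le_monotoneOn hf (fun y hy ↦ (hr' hy).1) hmono
          (fun y hy ↦ by simpa using (hr' hy).2.1) hx
      _ = C * ‖x / Real.log x‖ := by
        rw [norm_div, Real.norm_of_nonneg hx.1.le, Real.norm_eq_abs]
        ring
  rw [← Ioi_insert, nhdsWithin_insert]
  exact .sup (isBigO_pure.2 fun _ ↦ sub_self _) hpos

lemma mul_log_isLittleO_sqrt : (fun x ↦ x * Real.log x) =o[𝓝[>] 0] Real.sqrt := by
  refine ((isBigO_refl (fun x : ℝ ↦ x) _).mul_isLittleO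
    (isLittleO_log_rpow_nhdsGT_zero (r := -(1 / 2)) (by norm_num))).congr' .rfl ?_
  filter_upwards [self_mem_nhdsWithin] with x (hx : 0 < x)
  rw [Real.sqrt_eq_rpow, ← Real.rpow_one_add' hx.le (by norm_num)]
  norm_num

lemma isBigO_div_log_of_isBigO_mul_log {α : Type*} {l : Filter α} {u s : α → ℝ}
    (hs : Tendsto s l (𝓝[>] 0)) (hu : u =O[l] fun a ↦ s a * Real.log (s a)) :
    (fun a ↦ u a / Real.log (u a)) =O[l] s := by
  have hu_sqrt : ∀ᶠ a in l, ‖u a‖ ≤ Real.sqrt (s a) := by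
    have hlittle := hu.trans_isLittleO (mul_log_isLittleO_sqrt.comp_tendsto hs)
    filter_upwards [hlittle.bound one_pos] with a ha
    simpa [abs_of_nonneg (Real.sqrt_nonneg _)] using ha
  obtain ⟨K, hK, hbound⟩ := hu.exists_pos
  refine .of_bound (2 * K) ?_
  filter_upwards [hu_sqrt, hbound.bound, hs (Ioo_mem_nhdsGT one_pos)] with a hsqrt hle hsa
  rcases eq_or_ne (u a) 0 with h0 | h0
  · simp only [h0, zero_div, norm_zero]
    positivity
  have hlog_neg : Real.log (s a) < 0 := Real.log_neg hsa.1 hsa.2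
  have hlog_le : Real.log (u a) ≤ Real.log (s a) / 2 := by
    rw [← Real.log_abs, ← Real.log_sqrt hsa.1.le]
    exact Real.log_le_log (abs_pos.2 h0) hsqrt
  have habs_log : |Real.log (s a)| ≤ 2 * |Real.log (u a)| := by
    rw [abs_of_neg hlog_neg, abs_of_neg (by linarith)]
    linarith
  rw [norm_div, div_le_iff₀ (norm_pos_iff.2 (by linarith))]
  calc ‖u a‖
    _ ≤ K * (‖s a‖ * |Real.log (s a)|) := by
      simpa only [norm_mul, Real.norm_eq_abs (Real.log (s a))] using hle
    _ ≤ K * (‖s a‖ * (2 * |Real.log (u a)|)) := by gcongr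
    _ = 2 * K * ‖s a‖ * ‖Real.log (u a)‖ := by
      rw [Real.norm_eq_abs (Real.log (u a))]
      ring

end LogarithmicAsymptotics

section TruncatedGeometricSeries

variable {a : ℕ → ℝ} {r s : ℝ}

lemma tsum_le_mul_add_pow_mul (hr₀ : 0 ≤ r) (hr₁ : r < 1) (ha : Summable a)
    (has : ∀ n, a n ≤ s) (har : ∀ n, a n ≤ r ^ n) (k : ℕ) :
    ∑' n, a n ≤ k * s + r ^ k * (1 - r)⁻¹ := by
  have hhead : ∑ n ∈ Finset.range k, a n ≤ k * s := by
    simpa using Finset.sum_le_card_nsmul (Finset.range k) a s fun n _ ↦ has n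
  have htail : ∑' n, a (n + k) ≤ r ^ k * (1 - r)⁻¹ := by
    rw [← tsum_geometric_of_lt_one hr₀ hr₁, ← tsum_mul_left]
    refine ((summable_nat_add_iff k).2 ha).tsum_le_tsum (fun n ↦ ?_)
      ((summable_geometric_of_lt_one hr₀ hr₁).mul_left _)
    rw [← pow_add, add_comm k]
    exact har (n + k)
  rw [← ha.sum_add_tsum_nat_add k]
  exact add_le_add hhead htail

lemma tsum_le_mul_logb (hr₀ : 0 < r) (hr₁ : r < 1) (hs₀ : 0 < s) (hs₁ : s ≤ 1) (ha : Summable a)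
    (has : ∀ n, a n ≤ s) (har : ∀ n, a n ≤ r ^ n) :
    ∑' n, a n ≤ s * (Real.logb r s + 1 + (1 - r)⁻¹) := by
  set k := ⌈Real.logb r s⌉₊
  have hlogb : 0 ≤ Real.logb r s := (Real.logb_nonneg_iff_of_base_lt_one hr₀ hr₁ hs₀).2 hs₁
  have hk : (k : ℝ) ≤ Real.logb r s + 1 := (Nat.ceil_lt_add_one hlogb).le
  have hrk : r ^ k ≤ s := by
    rw [← Real.rpow_natCast, ← Real.logb_le_iff_le_rpow_of_base_lt_one hr₀ hr₁ hs₀]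
    exact Nat.le_ceil _
  calc ∑' n, a n
    _ ≤ k * s + r ^ k * (1 - r)⁻¹ := tsum_le_mul_add_pow_mul hr₀.le hr₁ ha has har k
    _ ≤ (Real.logb r s + 1) * s + s * (1 - r)⁻¹ :=
      add_le_add (mul_le_mul_of_nonneg_right hk hs₀.le)
        (mul_le_mul_of_nonneg_right hrk (inv_nonneg.2 (sub_nonneg.2 hr₁.le)))
    _ = s * (Real.logb r s + 1 + (1 - r)⁻¹) := by ring

end TruncatedGeometricSeries

section BetaExpansion

variable {β : ℝ}

lemma betaOrbit_mem_Icc (β : ℝ) (n : ℕ) : betaOrbit β n ∈ Icc 0 1 := by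
  cases n with
  | zero => simp [betaOrbit]
  | succ n => exact ⟨Int.fract_nonneg _, (Int.fract_lt_one _).le⟩

lemma betaOrbit_succ_le (hβ : 0 ≤ β) (n : ℕ) : betaOrbit β (n + 1) ≤ Int.fract β * β ^ n := by
  induction n with
  | zero => simp [betaOrbit]
  | succ n ih =>
    have hnonneg : 0 ≤ β * betaOrbit β (n + 1) := mul_nonneg hβ (betaOrbit_mem_Icc β _).1
    calc betaOrbit β (n + 2)
      _ ≤ β * betaOrbit β (n + 1) :=
        sub_le_self _ (Int.cast_nonneg (Int.floor_nonneg.2 hnonneg))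
      _ ≤ β * (Int.fract β * β ^ n) := by gcongr
      _ = Int.fract β * β ^ (n + 1) := by ring

lemma summable_div_pow_of_mem_Icc {u : ℕ → ℝ} (hβ : 1 < β) (hu : ∀ n, u n ∈ Icc 0 1) :
    Summable fun n ↦ u n / β ^ n := by
  have hβ₀ : 0 < β := one_pos.trans hβ
  refine .of_nonneg_of_le (fun n ↦ div_nonneg (hu n).1 (pow_nonneg hβ₀.le n)) (fun n ↦ ?_)
    (summable_geometric_of_lt_one (inv_nonneg.2 hβ₀.le) (inv_lt_one_of_one_lt₀ hβ))
  rw [inv_pow, ← one_div]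
  exact div_le_div_of_nonneg_right (hu n).2 (pow_nonneg hβ₀.le n)

lemma summable_betaOrbit_sq_div (hβ : 1 < β) :
    Summable fun n ↦ betaOrbit β n ^ 2 / (2 * β ^ n) := by
  have hsq : ∀ n, betaOrbit β n ^ 2 ∈ Icc 0 1 := fun n ↦
    ⟨sq_nonneg _, pow_le_one₀ (betaOrbit_mem_Icc β n).1 (betaOrbit_mem_Icc β n).2⟩
  simpa only [mul_comm (2 : ℝ), div_mul_eq_div_div]
    using (summable_div_pow_of_mem_Icc hβ hsq).div_const 2

lemma half_le_tsum_betaOrbit_sq_div (hβ : 1 < β) :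
    1 / 2 ≤ ∑' n, betaOrbit β n ^ 2 / (2 * β ^ n) := by
  simpa [betaOrbit] using (summable_betaOrbit_sq_div hβ).le_tsum 0 fun n _ ↦
    div_nonneg (sq_nonneg _) (mul_nonneg zero_le_two (pow_nonneg (one_pos.trans hβ).le n))

lemma betaOrbit_mul_one_sub_mem_Icc (β : ℝ) (n : ℕ) :
    betaOrbit β n * (1 - betaOrbit β n) ∈ Icc 0 (betaOrbit β n) := by
  obtain ⟨h₀, h₁⟩ := betaOrbit_mem_Icc β n
  exact ⟨mul_nonneg h₀ (sub_nonneg.2 h₁), mul_le_of_le_one_right h₀ (sub_le_self 1 h₀)⟩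

lemma summable_betaOrbit_mul_one_sub_div (hβ : 1 < β) :
    Summable fun n ↦ betaOrbit β n * (1 - betaOrbit β n) / β ^ n :=
  summable_div_pow_of_mem_Icc hβ fun n ↦
    Icc_subset_Icc_right (betaOrbit_mem_Icc β n).2 (betaOrbit_mul_one_sub_mem_Icc β n)

lemma one_div_Ebeta_sub_two_eq (hβ : 1 < β) :
    1 / Ebeta β - 2 = (∑' n, betaOrbit β n * (1 - betaOrbit β n) / β ^ n) /
      ∑' n, betaOrbit β n ^ 2 / (2 * β ^ n) := by
  have hne : ∑' n, betaOrbit β n ^ 2 / (2 * β ^ n) ≠ 0 :=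
    (one_half_pos.trans_le (half_le_tsum_betaOrbit_sq_div hβ)).ne'
  rw [Ebeta, one_div_div, eq_div_iff hne, sub_mul, div_mul_cancel₀ _ hne, ← tsum_mul_left,
    ← (summable_div_pow_of_mem_Icc hβ (betaOrbit_mem_Icc β)).tsum_sub
      ((summable_betaOrbit_sq_div hβ).mul_left 2)]
  refine tsum_congr fun n ↦ ?_
  have hpow : β ^ n ≠ 0 := (pow_pos (one_pos.trans hβ) n).ne'
  field_simp

lemma tsum_betaOrbit_mul_one_sub_div_nonneg (hβ : 1 < β) :
    0 ≤ ∑' n, betaOrbit β n * (1 - betaOrbit β n) / β ^ n :=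
  tsum_nonneg fun n ↦
    div_nonneg (betaOrbit_mul_one_sub_mem_Icc β n).1 (pow_nonneg (one_pos.trans hβ).le n)

lemma tsum_betaOrbit_mul_one_sub_div_le (hβ : 1 < β) (hs : 0 < Int.fract β) :
    ∑' n, betaOrbit β n * (1 - betaOrbit β n) / β ^ n ≤
      Int.fract β * (Real.logb β⁻¹ (Int.fract β) + 1 + (1 - β⁻¹)⁻¹) := by
  have hβ₀ : 0 < β := one_pos.trans hβ
  have hterm : ∀ n, betaOrbit β (n + 1) * (1 - betaOrbit β (n + 1)) / β ^ (n + 1) ≤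
      betaOrbit β (n + 1) / β ^ n := fun n ↦
    div_le_div₀ (betaOrbit_mem_Icc β _).1 (betaOrbit_mul_one_sub_mem_Icc β _).2 (by positivity)
      (pow_le_pow_right₀ hβ.le n.le_succ)
  have hsummable := summable_betaOrbit_mul_one_sub_div hβ
  have hzero : betaOrbit β 0 * (1 - betaOrbit β 0) / β ^ 0 = 0 := by simp [betaOrbit]
  rw [hsummable.tsum_eq_zero_add, hzero, zero_add]
  refine tsum_le_mul_logb (inv_pos.2 hβ₀) (inv_lt_one_of_one_lt₀ hβ) hs (Int.fract_lt_one β).le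
    ((summable_nat_add_iff 1).2 hsummable) (fun n ↦ (hterm n).trans ?_)
    (fun n ↦ (hterm n).trans ?_)
  · exact (div_le_iff₀ (by positivity)).2 (betaOrbit_succ_le hβ₀.le n)
  · rw [inv_pow, ← one_div]
    exact div_le_div_of_nonneg_right (betaOrbit_mem_Icc β _).2 (by positivity)

lemma one_div_Ebeta_sub_two_nonneg (hβ : 1 < β) : 0 ≤ 1 / Ebeta β - 2 := by
  rw [one_div_Ebeta_sub_two_eq hβ]
  exact div_nonneg (tsum_betaOrbit_mul_one_sub_div_nonneg hβ)
    (one_half_pos.le.trans (half_le_tsum_betaOrbit_sq_div hβ))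

lemma one_div_Ebeta_sub_two_le (hβ : 1 < β) (hs : 0 < Int.fract β) :
    1 / Ebeta β - 2 ≤
      2 * (Int.fract β * (Real.logb β⁻¹ (Int.fract β) + 1 + (1 - β⁻¹)⁻¹)) := by
  rw [one_div_Ebeta_sub_two_eq hβ]
  calc _ / _
    _ ≤ (∑' n, betaOrbit β n * (1 - betaOrbit β n) / β ^ n) / (1 / 2) :=
      div_le_div_of_nonneg_left (tsum_betaOrbit_mul_one_sub_div_nonneg hβ) one_half_pos
        (half_le_tsum_betaOrbit_sq_div hβ)
    _ = 2 * ∑' n, betaOrbit β n * (1 - betaOrbit β n) / β ^ n := by ring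
    _ ≤ 2 * (Int.fract β * (Real.logb β⁻¹ (Int.fract β) + 1 + (1 - β⁻¹)⁻¹)) :=
      mul_le_mul_of_nonneg_left (tsum_betaOrbit_mul_one_sub_div_le hβ hs) zero_le_two

end BetaExpansion

section RightOfAnInteger

variable {N : ℤ}

lemma tendsto_sub_nhdsGT_zero (a : ℝ) : Tendsto (fun x ↦ x - a) (𝓝[>] a) (𝓝[>] 0) := by
  refine tendsto_nhdsWithin_iff.2 ⟨?_, eventually_mem_nhdsWithin.mono fun x hx ↦ ?_⟩
  · exact (tendsto_sub_nhds_zero_iff.2 tendsto_id).mono_left nhdsWithin_le_nhds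
  · exact mem_Ioi.2 (sub_pos.2 hx)

lemma eventually_one_lt_and_fract_eq_sub (hN : 1 ≤ N) :
    ∀ᶠ β : ℝ in 𝓝[>] (N : ℝ), 1 < β ∧ Int.fract β = β - N := by
  filter_upwards [Ioo_mem_nhdsGT (lt_add_one (N : ℝ))] with β hβ
  have hN' : (1 : ℝ) ≤ N := mod_cast hN
  refine ⟨hN'.trans_lt hβ.1, ?_⟩
  rw [Int.fract, Int.floor_eq_iff.2 ⟨hβ.1.le, hβ.2⟩]

lemma logb_inv_add_isBigO_log (hN : 1 < N) :
    (fun β : ℝ ↦ Real.logb β⁻¹ (β - N) + 1 + (1 - β⁻¹)⁻¹)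
      =O[𝓝[>] (N : ℝ)] fun β ↦ Real.log (β - N) := by
  have hN₁ : (1 : ℝ) < N := mod_cast hN
  have hlog : Tendsto (fun β : ℝ ↦ Real.log (β - N)) (𝓝[>] (N : ℝ)) atBot :=
    Real.tendsto_log_nhdsGT_zero.comp (tendsto_sub_nhdsGT_zero _)
  have hone : (fun _ ↦ 1 : ℝ → ℝ) =O[𝓝[>] (N : ℝ)] fun β ↦ Real.log (β - N) :=
    (isLittleO_const_left.2 (.inr (tendsto_abs_atBot_atTop.comp hlog))).isBigO
  have hlogb : (fun β : ℝ ↦ Real.logb β⁻¹ (β - N))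
      =O[𝓝[>] (N : ℝ)] fun β ↦ Real.log (β - N) := by
    have hcont : ContinuousAt (fun β : ℝ ↦ (Real.log β⁻¹)⁻¹) N := by
      have hlog_ne : Real.log (N : ℝ)⁻¹ ≠ 0 := by
        simpa using (Real.log_pos hN₁).ne'
      fun_prop (disch := first | assumption | positivity)
    simpa only [Real.logb, div_eq_mul_inv, mul_one] using (isBigO_refl _ _).mul
      ((hcont.tendsto.mono_left nhdsWithin_le_nhds).isBigO_one ℝ)
  have hconst : (fun β : ℝ ↦ 1 + (1 - β⁻¹)⁻¹) =O[𝓝[>] (N : ℝ)] fun _ ↦ (1 : ℝ) := by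
    have hcont : ContinuousAt (fun β : ℝ ↦ 1 + (1 - β⁻¹)⁻¹) N := by
      have hsub_ne : 1 - (N : ℝ)⁻¹ ≠ 0 := (sub_pos.2 (inv_lt_one_of_one_lt₀ hN₁)).ne'
      fun_prop (disch := first | assumption | positivity)
    exact (hcont.tendsto.mono_left nhdsWithin_le_nhds).isBigO_one ℝ
  simpa only [add_assoc] using hlogb.add (hconst.trans hone)

lemma one_div_Ebeta_sub_two_isBigO (hN : 1 < N) :
    (fun β ↦ 1 / Ebeta β - 2) =O[𝓝[>] (N : ℝ)] fun β ↦ (β - N) * Real.log (β - N) := by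
  refine IsBigO.trans (.of_bound 2 ?_) ((isBigO_refl _ _).mul (logb_inv_add_isBigO_log hN))
  filter_upwards [eventually_one_lt_and_fract_eq_sub hN.le, self_mem_nhdsWithin]
    with β ⟨hβ, hfract⟩ (hlt : (N : ℝ) < β)
  rw [Real.norm_of_nonneg (one_div_Ebeta_sub_two_nonneg hβ), ← hfract]
  refine (one_div_Ebeta_sub_two_le hβ (hfract ▸ sub_pos.2 hlt)).trans ?_
  gcongr
  exact le_abs_self _

lemma tendsto_one_div_Ebeta_sub_two (hN : 1 < N) :
    Tendsto (fun β ↦ 1 / Ebeta β - 2) (𝓝[>] (N : ℝ)) (𝓝[≥] 0) := by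
  refine tendsto_nhdsWithin_iff.2 ⟨(one_div_Ebeta_sub_two_isBigO hN).trans_tendsto ?_, ?_⟩
  · have hlim : Tendsto (fun x ↦ x * Real.log x) (𝓝[>] 0) (𝓝 0) :=
      (Real.continuous_mul_log.tendsto' 0 0 (zero_mul _)).mono_left nhdsWithin_le_nhds
    exact hlim.comp (tendsto_sub_nhdsGT_zero _)
  · exact (eventually_one_lt_and_fract_eq_sub hN.le).mono fun β hβ ↦
      one_div_Ebeta_sub_two_nonneg hβ.1

lemma comp_one_div_Ebeta_sub_two_isBigO {E : Type*} [NormedAddCommGroup E] [NormedSpace ℝ E]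
    {f : ℝ → E} (hN : 1 < N) (hf : ContinuousWithinAt f (Ioi 0) 0)
    (hdiff : ∀ᶠ x in 𝓝[>] 0, DifferentiableAt ℝ f x)
    (hderiv : deriv f =O[𝓝[>] 0] fun x ↦ (Real.log x)⁻¹) :
    (fun β ↦ f (1 / Ebeta β - 2) - f 0) =O[𝓝[>] (N : ℝ)] fun β ↦ β - N :=
  ((isBigO_sub_div_log_of_deriv_isBigO_inv_log hf hdiff hderiv).comp_tendsto
    (tendsto_one_div_Ebeta_sub_two hN)).trans
    (isBigO_div_log_of_isBigO_mul_log (tendsto_sub_nhdsGT_zero _)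
      (one_div_Ebeta_sub_two_isBigO hN))

end RightOfAnInteger

theorem stmt9_general {F : ℝ → ℝ} {N : ℤ} (hN : 1 < N) (hF : ContinuousWithinAt F (Ioi 0) 0)
    (hdiff : ∀ᶠ x in 𝓝[>] 0, DifferentiableAt ℝ F x) (hF0 : F 0 = 0)
    (hF' : deriv F =O[𝓝[>] 0] fun x ↦ (Real.log x)⁻¹) :
    ∃ δ > (0 : ℝ), ∃ M > (0 : ℝ), ∀ ε β : ℝ, N < β → β < N + δ →
      |psi ε F β - 2| ≤ |ε| * M * (β - N) := by
  obtain ⟨δ, hδ, M, hM, h⟩ :=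
    exists_norm_le_mul_of_isBigO_nhdsGT (comp_one_div_Ebeta_sub_two_isBigO hN hF hdiff hF')
  refine ⟨δ, hδ, M, hM, fun ε β hlt hβ ↦ ?_⟩
  have hFβ := h β hlt hβ
  rw [hF0, sub_zero, Real.norm_of_nonneg (sub_pos.2 hlt).le, Real.norm_eq_abs] at hFβ
  rw [psi, add_sub_cancel_left, abs_mul, mul_assoc]
  exact mul_le_mul_of_nonneg_left hFβ (abs_nonneg ε)

/-- Lipschitz bound for `ψ^ε` at `β = 2` when `F'(x) = O(1/|log x|)` as `x → 0⁺`. -/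
theorem stmt9 (F : ℝ → ℝ) (hF : ContDiff ℝ 1 F) (hF0 : F 0 = 0)
    (hF' : ∃ C > (0:ℝ), ∃ x₀ ∈ Set.Ioo (0:ℝ) 1, ∀ x : ℝ, 0 < x → x < x₀ →
      |deriv F x| ≤ C / |Real.log x|) :
    ∃ δ > (0:ℝ), ∃ M > (0:ℝ), ∀ ε : ℝ, 0 ≤ ε → ∀ β : ℝ, 2 < β → β < 2 + δ →
      |psi ε F β - 2| ≤ ε * M * (β - 2) := by
  obtain ⟨C, -, x₀, hx₀, hbound⟩ := hF'
  obtain ⟨δ, hδ, M, hM, h⟩ := stmt9_general (N := 2) one_lt_two hF.continuous.continuousWithinAt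
    (.of_forall (hF.differentiable one_ne_zero)) hF0
    (isBigO_inv_log_of_norm_le_div_abs_log hx₀.1 hbound)
  exact ⟨δ, hδ, M, hM, fun ε hε β hlt hβ ↦ by
    simpa [abs_of_nonneg hε] using h ε β (mod_cast hlt) (mod_cast hβ)⟩
end

section
/- For every β ≥ 2 one has 1/4 ≤ (β − 1)/(2β) ≤ E(β) ≤ 1/2, and E(β) = 1/2 if and only if β is an integer (in particular E(β) < 1/2 whenever β is not an integer). -/
/-!
Each block `𝟙_{[0, t)}` of the Parry density contributes `∫₀ᵗ (1/2 - x) dx = t (1 - t) / 2` to the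
difference between half the total mass and the first moment. Since every `tₙ` lies in `[0, 1]`, this
difference is nonnegative, and it vanishes exactly when every `tₙ` is `0` or `1`. As `tₙ < 1` for
`n ≥ 1`, that means `t₁ = fract β = 0`. For the lower bound, the block `n = 0` alone gives a first
moment of at least `1/2`, while the total mass is at most the geometric sum `β / (β - 1)`.
-/

section GeometricWeights

variable {β C : ℝ} {a : ℕ → ℝ}

theorem hasSum_const_div_pow (hβ : 1 < β) (C : ℝ) :
    HasSum (fun n : ℕ ↦ C / β ^ n) (C * (β / (β - 1))) := by
  have hβ₀ : 0 < β := one_pos.trans hβ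
  have hratio : (1 - β⁻¹)⁻¹ = β / (β - 1) := by
    rw [← inv_div, sub_div, div_self hβ₀.ne', one_div]
  have hgeom := hasSum_geometric_of_lt_one (inv_nonneg.2 hβ₀.le) (inv_lt_one_of_one_lt₀ hβ)
  simpa only [hratio, inv_pow, ← div_eq_mul_inv] using hgeom.mul_left C

theorem summable_div_pow_of_abs_le (hβ : 1 < β) (ha : ∀ n, |a n| ≤ C) :
    Summable fun n ↦ a n / β ^ n := by
  refine .of_norm_bounded (hasSum_const_div_pow hβ C).summable fun n ↦ ?_
  rw [Real.norm_eq_abs, abs_div, abs_of_pos (by positivity : 0 < β ^ n)]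
  gcongr
  exact ha n

end GeometricWeights

section Orbit

variable (β : ℝ) (n : ℕ)

theorem betaOrbit_nonneg : 0 ≤ betaOrbit β n := by
  cases n with
  | zero => exact zero_le_one
  | succ n => exact Int.fract_nonneg _

theorem betaOrbit_succ_lt_one : betaOrbit β (n + 1) < 1 :=
  Int.fract_lt_one _

theorem betaOrbit_le_one : betaOrbit β n ≤ 1 := by
  cases n with
  | zero => exact le_rfl
  | succ n => exact (betaOrbit_succ_lt_one β n).le

theorem abs_betaOrbit_le_one : |betaOrbit β n| ≤ 1 :=
  (abs_of_nonneg (betaOrbit_nonneg β n)).trans_le (betaOrbit_le_one β n)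

theorem betaOrbit_mul_one_sub_nonneg : 0 ≤ betaOrbit β n * (1 - betaOrbit β n) :=
  mul_nonneg (betaOrbit_nonneg β n) (sub_nonneg.2 (betaOrbit_le_one β n))

theorem betaOrbit_one : betaOrbit β 1 = Int.fract β :=
  congrArg Int.fract (mul_one β)

variable {β}

theorem betaOrbit_succ_eq_zero_of_fract_eq_zero (hβ : Int.fract β = 0) :
    betaOrbit β (n + 1) = 0 := by
  induction n with
  | zero => rw [betaOrbit_one, hβ]
  | succ n ih => rw [betaOrbit, ih, mul_zero, Int.fract_zero]

theorem forall_betaOrbit_mul_one_sub_eq_zero_iff :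
    (∀ n, betaOrbit β n * (1 - betaOrbit β n) = 0) ↔ Int.fract β = 0 := by
  refine ⟨fun h ↦ ?_, fun hβ n ↦ ?_⟩
  · have hne : 1 - betaOrbit β 1 ≠ 0 := (sub_pos.2 (betaOrbit_succ_lt_one β 0)).ne'
    rw [← betaOrbit_one]
    exact (mul_eq_zero.1 (h 1)).resolve_right hne
  · cases n with
    | zero => rw [betaOrbit, sub_self, mul_zero]
    | succ n => rw [betaOrbit_succ_eq_zero_of_fract_eq_zero n hβ, zero_mul]

end Orbit

/-- The total mass of the unnormalized Parry density `∑ β⁻ⁿ 𝟙_{[0, tₙ)}`; the denominator of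
`Ebeta β`. -/
noncomputable def parryMass (β : ℝ) : ℝ :=
  ∑' n : ℕ, betaOrbit β n / β ^ n

/-- The first moment of the unnormalized Parry density `∑ β⁻ⁿ 𝟙_{[0, tₙ)}`; the numerator of
`Ebeta β`. -/
noncomputable def parryMoment (β : ℝ) : ℝ :=
  ∑' n : ℕ, betaOrbit β n ^ 2 / (2 * β ^ n)

section Parry

variable {β : ℝ}

theorem Ebeta_eq_parryMoment_div_parryMass (β : ℝ) : Ebeta β = parryMoment β / parryMass β :=
  rfl

theorem hasSum_parryMass (hβ : 1 < β) : HasSum (fun n ↦ betaOrbit β n / β ^ n) (parryMass β) :=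
  (summable_div_pow_of_abs_le hβ (abs_betaOrbit_le_one β)).hasSum

theorem hasSum_parryMoment (hβ : 1 < β) :
    HasSum (fun n ↦ betaOrbit β n ^ 2 / (2 * β ^ n)) (parryMoment β) := by
  have hsq (n : ℕ) : |betaOrbit β n ^ 2 / 2| ≤ 1 / 2 := by
    rw [abs_div, abs_pow, abs_two]
    gcongr
    exact pow_le_one₀ (abs_nonneg _) (abs_betaOrbit_le_one β n)
  have hsummable := summable_div_pow_of_abs_le hβ hsq
  simp only [div_div] at hsummable
  exact hsummable.hasSum

theorem one_le_parryMass (hβ : 1 < β) : 1 ≤ parryMass β :=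
  calc 1 = betaOrbit β 0 / β ^ 0 := by rw [betaOrbit, pow_zero, div_one]
    _ ≤ parryMass β := le_hasSum (hasSum_parryMass hβ) 0 fun n _ ↦
      div_nonneg (betaOrbit_nonneg β n) (by positivity)

theorem parryMass_pos (hβ : 1 < β) : 0 < parryMass β :=
  one_pos.trans_le (one_le_parryMass hβ)

theorem parryMass_le (hβ : 1 < β) : parryMass β ≤ β / (β - 1) := by
  have hterm (n : ℕ) : betaOrbit β n / β ^ n ≤ 1 / β ^ n := by
    gcongr
    exact betaOrbit_le_one β n
  simpa only [one_mul] using hasSum_le hterm (hasSum_parryMass hβ) (hasSum_const_div_pow hβ 1)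

theorem one_half_le_parryMoment (hβ : 1 < β) : 1 / 2 ≤ parryMoment β :=
  calc 1 / 2 = betaOrbit β 0 ^ 2 / (2 * β ^ 0) := by rw [betaOrbit, one_pow, pow_zero, mul_one]
    _ ≤ parryMoment β := le_hasSum (hasSum_parryMoment hβ) 0 fun n _ ↦ by positivity

theorem hasSum_half_parryMass_sub_parryMoment (hβ : 1 < β) :
    HasSum (fun n ↦ betaOrbit β n * (1 - betaOrbit β n) / (2 * β ^ n))
      (parryMass β / 2 - parryMoment β) := by
  have hterm (n : ℕ) : betaOrbit β n * (1 - betaOrbit β n) / (2 * β ^ n) =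
      betaOrbit β n / β ^ n / 2 - betaOrbit β n ^ 2 / (2 * β ^ n) := by
    ring
  simpa only [hterm] using ((hasSum_parryMass hβ).div_const 2).sub (hasSum_parryMoment hβ)

theorem parryMoment_le_half_parryMass (hβ : 1 < β) : parryMoment β ≤ parryMass β / 2 :=
  sub_nonneg.1 <| (hasSum_half_parryMass_sub_parryMoment hβ).nonneg fun n ↦
    div_nonneg (betaOrbit_mul_one_sub_nonneg β n) (by positivity)

theorem parryMoment_eq_half_parryMass_iff (hβ : 1 < β) :
    parryMoment β = parryMass β / 2 ↔ Int.fract β = 0 := by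
  have hgap := hasSum_half_parryMass_sub_parryMoment hβ
  have hterm (n : ℕ) : 0 ≤ betaOrbit β n * (1 - betaOrbit β n) / (2 * β ^ n) :=
    div_nonneg (betaOrbit_mul_one_sub_nonneg β n) (by positivity)
  have hden (n : ℕ) : 2 * β ^ n ≠ 0 := by positivity
  calc parryMoment β = parryMass β / 2
      ↔ parryMass β / 2 - parryMoment β = 0 := by rw [sub_eq_zero, eq_comm]
    _ ↔ ∀ n, betaOrbit β n * (1 - betaOrbit β n) / (2 * β ^ n) = 0 := by
        rw [← hgap.tsum_eq, ← hgap.summable.hasSum_iff, hasSum_zero_iff_of_nonneg hterm]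
        simp only [funext_iff, Pi.zero_apply]
    _ ↔ ∀ n, betaOrbit β n * (1 - betaOrbit β n) = 0 := by
        simp only [div_eq_zero_iff, hden, or_false]
    _ ↔ Int.fract β = 0 := forall_betaOrbit_mul_one_sub_eq_zero_iff

end Parry

section Expectation

variable {β : ℝ}

theorem sub_one_div_two_mul_le_Ebeta (hβ : 1 < β) : (β - 1) / (2 * β) ≤ Ebeta β :=
  calc (β - 1) / (2 * β) = 1 / 2 / (β / (β - 1)) := by rw [div_div_div_eq, one_mul]
    _ ≤ parryMoment β / parryMass β :=
      div_le_div₀ (one_half_pos.le.trans (one_half_le_parryMoment hβ)) (one_half_le_parryMoment hβ)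
        (parryMass_pos hβ) (parryMass_le hβ)

theorem Ebeta_le_one_half (hβ : 1 < β) : Ebeta β ≤ 1 / 2 := by
  rw [Ebeta_eq_parryMoment_div_parryMass, div_le_iff₀ (parryMass_pos hβ), one_div_mul_eq_div]
  exact parryMoment_le_half_parryMass hβ

theorem Ebeta_eq_one_half_iff (hβ : 1 < β) : Ebeta β = 1 / 2 ↔ Int.fract β = 0 := by
  rw [Ebeta_eq_parryMoment_div_parryMass, div_eq_iff (parryMass_pos hβ).ne', one_div_mul_eq_div]
  exact parryMoment_eq_half_parryMass_iff hβ

theorem one_fourth_le_sub_one_div_two_mul_iff (hβ : 0 < β) :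
    1 / 4 ≤ (β - 1) / (2 * β) ↔ 2 ≤ β := by
  rw [div_le_div_iff₀ four_pos (by positivity)]
  constructor <;> intro h <;> linarith

end Expectation

theorem stmt13_general (β : ℝ) (hβ : 1 < β) :
    (1 / 4 ≤ (β - 1) / (2 * β) ↔ 2 ≤ β) ∧ (β - 1) / (2 * β) ≤ Ebeta β ∧ Ebeta β ≤ 1 / 2 ∧
      (Ebeta β = 1 / 2 ↔ ∃ n : ℤ, β = (n : ℝ)) := by
  refine ⟨one_fourth_le_sub_one_div_two_mul_iff (one_pos.trans hβ),
    sub_one_div_two_mul_le_Ebeta hβ, Ebeta_le_one_half hβ, ?_⟩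
  rw [Ebeta_eq_one_half_iff hβ, Int.fract_eq_zero_iff, Set.mem_range]
  simp only [eq_comm]

/-- Uniform bounds on `E(β)`: `1/4 ≤ (β−1)/(2β) ≤ E(β) ≤ 1/2`, with equality
`E(β) = 1/2` iff `β` is an integer. -/
theorem stmt13 (β : ℝ) (hβ : 2 ≤ β) :
    1/4 ≤ (β - 1) / (2 * β) ∧ (β - 1) / (2 * β) ≤ Ebeta β ∧ Ebeta β ≤ 1/2 ∧
      (Ebeta β = 1/2 ↔ ∃ n : ℤ, β = (n : ℝ)) := by
  obtain ⟨hquarter, hE⟩ := stmt13_general β (one_lt_two.trans_le hβ)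
  exact ⟨hquarter.2 hβ, hE⟩
end
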